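/- arXiv:1712.04607 — 3 statements merged into one kernel-verified Lean document; each statement's English description precedes it below -/
import Mathlib

section
/- Let R be a commutative reduced ring (Nil(R) = 0) and n ≥ 1. Then every matrix in M_n(R) is a sum of three idempotent matrices if and only if R satisfies the identity x^3 = x (i.e., a^3 = a for all a ∈ R). -/
set_option linter.unusedSimpArgs false

section Forward
/-- anticommutation facts -/
theorem anti {A : Type*} [Ring A] {E F : A} (hE : E*E=E) (hF : F*F=F) :
   (E-F)*(E+F-1) = -((E+F-1)*(E-F)) ∧ (E-F)*(E-F) = 1 - (E+F-1)*(E+F-1) := by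
  constructor
  · simp only [mul_add, add_mul, mul_sub, sub_mul, hE, hF, mul_one, one_mul]; abel
  · simp only [mul_add, add_mul, mul_sub, sub_mul, hE, hF, mul_one, one_mul]; abel

theorem four_case {K A : Type*} [Field K] [Ring A] [Nontrivial A] [Algebra K A]
    (h2 : (2:K) ≠ 0) (h3 : (3:K) ≠ 0) (h5 : (5:K) ≠ 0) {E F G : A} (hE : E*E=E) (hF : F*F=F) (hG : G*G=G)
    (h : (4:K)•(1:A) = E + F + G) : False := by
  obtain ⟨h1, hD⟩ := anti hE hF
  have hG' : G = (3:K)•1 - (E+F-1) := by linear_combination (norm := module) -h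
  generalize E + F - 1 = S at *
  generalize E - F = D at *
  have hq : S*S = (5:K)•S - (6:K)•1 := by
    rw [hG'] at hG
    simp only [mul_add, add_mul, mul_sub, sub_mul, mul_smul_comm, smul_mul_assoc, mul_one, one_mul] at hG
    linear_combination (norm := module) hG
  have hc : D*(S*S) = (S*S)*D := by
    rw [← mul_assoc, h1, neg_mul, mul_assoc, h1]; noncomm_ring
  have hSD : (10:K) • (S * D) = 0 := by
    rw [hq] at hc
    simp only [mul_sub, sub_mul, mul_smul_comm, smul_mul_assoc, mul_one, one_mul, h1] at hc
    linear_combination (norm := module) -hc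
  have h10 : (10:K) ≠ 0 := by
    have : (10:K) = 2*5 := by norm_num
    rw [this]; exact mul_ne_zero h2 h5
  have hSD := (smul_eq_zero.mp hSD).resolve_left h10
  have h6 : (6:K) • D = 0 := by
    have := congrArg (· * D) hq
    simp only [mul_sub, sub_mul, mul_smul_comm, smul_mul_assoc, mul_one, one_mul, hSD, mul_assoc, mul_zero] at this
    linear_combination (norm := module) this
  have hD0 : D = 0 := by
    refine (smul_eq_zero.mp h6).resolve_left ?_
    have : (6:K) = 2*3 := by norm_num
    rw [this]; exact mul_ne_zero h2 h3
  rw [hD0, mul_zero] at hD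
  have e1 : (5:K)•S = (7:K)•1 := by linear_combination (norm := module) hD - hq
  have e2 : (25:K) • (S*S) = (49:K) • 1 := by
    have : ((5:K)•S) * ((5:K)•S) = ((7:K)•1)*((7:K)•1) := by rw [e1]
    simp only [mul_smul_comm, smul_mul_assoc, mul_one] at this
    linear_combination (norm := module) this
  have e3 : (24:K) • (1:A) = 0 := by linear_combination (norm := module) (25:K)•hD - e2
  have : (24:K) = 2*2*2*3 := by norm_num
  rcases smul_eq_zero.mp e3 with h | h
  · rw [this] at h; simp_all
  · exact one_ne_zero h

theorem cay {K A : Type*} [Field K] [Ring A] [Algebra K A] (h5 : (5:K)=0) (E N : A) (e : K)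
  (hE : E*E=E) (hN : N*N=(2:K)•N) (hNE : N*E*N = (2*e) • N) (S Q : A) (hS : S = (3:K)•1 + N - E)
  (hQ : Q = S*S+1) : S*S*Q - (2:K)•(S*Q) + (2*e)•Q = 0 ∧ Q = (3:K)•N - N*E - E*N := by
  have hE' : ∀ x, E*(E*x) = E*x := fun x => by rw [← mul_assoc, hE]
  have hN' : ∀ x, N*(N*x) = (2:K)•(N*x) := fun x => by rw [← mul_assoc, hN, smul_mul_assoc]
  have hNE1 : N*(E*N) = (2*e) • N := by rw [← mul_assoc, hNE]
  have hNE' : ∀ x, N*(E*(N*x)) = (2*e) • (N*x) := fun x => by rw [← mul_assoc, ← mul_assoc, hNE, smul_mul_assoc]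
  have hQ2 : Q = (3:K)•N - N*E - E*N := by
    rw [hQ, hS]
    simp only [mul_add, add_mul, mul_sub, sub_mul, mul_smul_comm, smul_mul_assoc, mul_one, one_mul, hE, hN, smul_smul, smul_add, smul_sub]
    match_scalars <;> grind
  refine ⟨?_, hQ2⟩
  rw [hQ2, hS]
  simp only [mul_add, add_mul, mul_sub, sub_mul, mul_smul_comm, smul_mul_assoc, mul_one, one_mul, hE, hN, mul_assoc, hE', hN', hNE1, hNE', smul_smul, smul_add, smul_sub]
  match_scalars <;> grind

theorem five_alg {K A : Type*} [Field K] [Ring A] [Algebra K A] (h5 : (5:K)=0) (h2 : (2:K) ≠ 0)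
    (h3 : (3:K) ≠ 0) {E F G N : A} (hE : E*E=E) (hF : F*F=F) (hG : G*G=G)
    (hN : N*N=(2:K)•N) (hN0 : N ≠ 0) (e : K) (hNE : N*G*N = (2*e) • N)
    (h : (4:K)•(1:A) + N = E + F + G) :
    ∃ P B C : A, P*P = P ∧ P ≠ 0 ∧ P = B*N*C ∧ P*(E+F-1) = (E+F-1)*P ∧ P*(E-F) = (E-F)*P ∧
      (E+F-1)*(E+F-1)*(1-P) = -(1-P) := by
  obtain ⟨h1, hD⟩ := anti hE hF
  have hS : (E+F-1) = (3:K)•1 + N - G := by linear_combination (norm := module) -h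
  generalize E + F - 1 = S at *
  generalize E - F = D at *
  obtain ⟨Q, hQ⟩ : ∃ Q, Q = S*S+1 := ⟨_, rfl⟩
  obtain ⟨hcay, hQ2⟩ := cay h5 G N e hG hN hNE S Q hS hQ
  have hc : D*(S*S) = (S*S)*D := by
    rw [← mul_assoc, h1, neg_mul, mul_assoc, h1]; noncomm_ring
  have hQS : Q*S = S*Q := by rw [hQ]; noncomm_ring
  have hQD : Q*D = D*Q := by rw [hQ, mul_add, hc]; noncomm_ring
  have hQ0 : Q ≠ 0 := by
    intro h0
    rw [h0] at hQ2
    have a1 := congrArg (· * G) hQ2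
    have a2 := congrArg (G * ·) hQ2
    have a3 : N*G = G*N := by
      simp only [mul_sub, sub_mul, mul_smul_comm, smul_mul_assoc, mul_zero, zero_mul, mul_assoc, hG] at a1 a2
      simp only [← mul_assoc, hG] at a1 a2
      have : (2:K) • (N*G-G*N) = 0 := by linear_combination (norm := module) -a1+a2
      exact sub_eq_zero.mp ((smul_eq_zero.mp this).resolve_left h2)
    have a4 : N*G = 0 := by
      simp only [mul_sub, sub_mul, mul_smul_comm, smul_mul_assoc, mul_zero, zero_mul, mul_assoc, hG] at a1
      rw [← mul_assoc, ← a3, mul_assoc, hG] at a1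
      linear_combination (norm := module) -a1
    rw [← a3, a4] at hQ2
    have : (3:K)•N = 0 := by linear_combination (norm := module) -hQ2
    exact hN0 ((smul_eq_zero.mp this).resolve_left h3)
  have hSDQ : S*D*Q = 0 := by
    have a1 := congrArg (D * ·) hcay
    have a2 := congrArg (· * D) hcay
    have b1 : D*(S*S*Q) = S*S*D*Q := by rw [← mul_assoc, hc]
    have b2 : D*(S*Q) = -(S*D*Q) := by rw [← mul_assoc, h1, neg_mul]
    have b3 : S*S*Q*D = S*S*D*Q := by rw [mul_assoc, hQD, ← mul_assoc]
    have b4 : S*Q*D = S*D*Q := by rw [mul_assoc, hQD, ← mul_assoc]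
    simp only [mul_add, add_mul, mul_sub, sub_mul, mul_smul_comm, smul_mul_assoc, mul_zero, zero_mul, b1, b2, b3, b4, hQD] at a1 a2
    have : (2*2:K) • (S*D*Q) = 0 := by linear_combination (norm := module) a1 - a2
    exact (smul_eq_zero.mp this).resolve_left (mul_ne_zero h2 h2)
  have hS3 : S*(S*S*Q) = S*Q := by
    have a1 := congrArg (· * D) hSDQ
    simp only [zero_mul] at a1
    rw [mul_assoc, hQD, mul_assoc, ← mul_assoc D, hD] at a1
    simp only [mul_sub, sub_mul, one_mul] at a1
    exact (sub_eq_zero.mp a1).symm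
  have hSS : S*S*Q = (2:K)•(S*Q) - (2*e)•Q := by linear_combination (norm := module) hcay
  have hk0 : (3-2*e) • (S*Q) = (4*e)•Q := by
    rw [hSS, mul_sub, mul_smul_comm, mul_smul_comm, ← mul_assoc, hSS] at hS3
    linear_combination (norm := module) hS3
  have h4 : (4:K) ≠ 0 := by
    have : (4:K) = 2*2 := by norm_num
    rw [this]; exact mul_ne_zero h2 h2
  have hne : 3 - 2*e ≠ 0 := by
    intro h0
    rw [h0, zero_smul] at hk0
    have := (smul_eq_zero.mp hk0.symm).resolve_right hQ0
    have he := (mul_eq_zero.mp this).resolve_left h4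
    rw [he] at h0
    apply h3
    linear_combination h0
  obtain ⟨k, hk⟩ : ∃ k : K, S*Q = k•Q := ⟨(3-2*e)⁻¹*(4*e), by
    rw [mul_smul, ← hk0, smul_smul, inv_mul_cancel₀ hne, one_smul]⟩
  have hk2 : S*S*Q = (k*k)•Q := by rw [mul_assoc, hk, mul_smul_comm, hk, smul_smul]
  have hk3 : k*k*k = k := by
    rw [hk2, mul_smul_comm, hk, smul_smul] at hS3
    exact smul_left_injective K hQ0 hS3
  have hkc : k = 0 ∨ k = 1 ∨ k = -1 := by grind
  have hq : k*k+1 ≠ 0 := by grind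
  have hm : (3-k)*(1-(3-k)) ≠ 0 := by grind
  have hQQ : Q*Q = (k*k+1)•Q := by
    have : Q*Q = (S*S+1)*Q := by rw [← hQ]
    rw [this, add_mul, hk2, one_mul]; module
  have hQB : (G-1+(3-k)•1)*N*Q = ((3-k)*(1-(3-k)))•Q := by
    have a : N*Q = (G - (3-k)•1)*Q := by
      have := hk
      rw [hS] at this
      simp only [add_mul, sub_mul, smul_mul_assoc, one_mul] at this ⊢
      linear_combination (norm := module) this
    rw [mul_assoc, a, ← mul_assoc]
    simp only [mul_add, add_mul, mul_sub, sub_mul, mul_smul_comm, smul_mul_assoc, mul_one, one_mul, hG]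
    module
  refine ⟨(k*k+1)⁻¹•Q, (((3-k)*(1-(3-k)))⁻¹*(k*k+1)⁻¹)•(G-1+(3-k)•1), Q, ?_, ?_, ?_, ?_, ?_, ?_⟩
  · rw [smul_mul_smul_comm, hQQ, smul_smul, mul_assoc, inv_mul_cancel₀ hq, mul_one]
  · exact smul_ne_zero (inv_ne_zero hq) hQ0
  · rw [smul_mul_assoc, smul_mul_assoc, hQB, smul_smul]
    congr 1; rw [mul_right_comm, inv_mul_cancel₀ hm, one_mul]
  · rw [smul_mul_assoc, mul_smul_comm, hQS]
  · rw [smul_mul_assoc, mul_smul_comm, hQD]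
  · have : S*S = Q - 1 := by rw [hQ]; abel
    rw [this, mul_sub, mul_one, sub_mul, mul_smul_comm, hQQ, smul_smul, inv_mul_cancel₀ hq, one_smul]
    noncomm_ring

theorem parity {K : Type*} [Field K] (h2 : (2:K) ≠ 0) {n : ℕ} (S D P : Matrix (Fin n) (Fin n) K)
    (h1 : D*S = -(S*D)) (hD : D*D = 1 - S*S) (hP : P*P=P) (hPS : P*S = S*P) (hPD : P*D = D*P)
    (hS : S*S*(1-P) = -(1-P)) : (-1)^n * (1 - (2:K)•P).det = 1 := by
  have hSS : S*S*P = S*S + (1 - P) := by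
    rw [mul_sub, mul_one] at hS
    linear_combination (norm := module) -hS
  have hPS' : ∀ x, P*(S*x) = S*(P*x) := fun x => by rw [← mul_assoc, hPS, mul_assoc]
  have hPD' : ∀ x, P*(D*x) = D*(P*x) := fun x => by rw [← mul_assoc, hPD, mul_assoc]
  have hP' : ∀ x, P*(P*x) = P*x := fun x => by rw [← mul_assoc, hP]
  have hD' : ∀ x, D*(D*x) = x - S*(S*x) := fun x => by rw [← mul_assoc, hD, sub_mul, one_mul, mul_assoc]
  have h1' : ∀ x, D*(S*x) = -(S*(D*x)) := fun x => by rw [← mul_assoc, h1, neg_mul, mul_assoc]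
  have hSS' : S*(S*P) = S*S + (1 - P) := by rw [← mul_assoc, hSS]
  set S' := S*(1-P)+P with hS'
  set D' := D*(1-P)+P with hD'd
  have e1 : D'*S' = -(S'*D'*(1-(2:K)•P)) := by
    rw [hS', hD'd]
    simp only [mul_add, add_mul, mul_sub, sub_mul, mul_smul_comm, smul_mul_assoc, mul_one, one_mul, mul_assoc, hPS, hPS', hPD, hPD', hP, hP', h1, h1', neg_mul, mul_neg]
    module
  have e2 : (S'*S')*(S'*S') = 1 := by
    have : S'*S' = (2:K)•P - 1 := by
      rw [hS']
      simp only [mul_add, add_mul, mul_sub, sub_mul, mul_smul_comm, smul_mul_assoc, mul_one, one_mul, mul_assoc, hPS, hPS', hP, hP', hSS']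
      module
    rw [this]
    simp only [mul_add, add_mul, mul_sub, sub_mul, mul_smul_comm, smul_mul_assoc, mul_one, one_mul, hP]
    module
  have e3 : (D'*D')*((2:K)•P + (1-P)) = (2:K)•1 := by
    have : D'*D' = (2:K)•(1-P) + P := by
      rw [hD'd]
      simp only [mul_add, add_mul, mul_sub, sub_mul, mul_smul_comm, smul_mul_assoc, mul_one, one_mul, mul_assoc, hPD, hPD', hP, hP', hD, hD', hSS']
      module
    rw [this]
    simp only [mul_add, add_mul, mul_sub, sub_mul, mul_smul_comm, smul_mul_assoc, mul_one, one_mul, hP, smul_sub]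
    module
  have d1 := congrArg Matrix.det e1
  have d2 := congrArg Matrix.det e2
  have d3 := congrArg Matrix.det e3
  rw [Matrix.det_neg] at d1
  simp only [Matrix.det_mul, Matrix.det_smul, Matrix.det_one, Fintype.card_fin] at d1 d2 d3
  have n1 : S'.det ≠ 0 := by intro h; simp [h] at d2
  have n2 : D'.det ≠ 0 := by
    intro h; rw [h] at d3; simp only [zero_mul, mul_one] at d3
    exact pow_ne_zero n h2 d3.symm
  have := mul_ne_zero n1 n2
  apply mul_left_cancel₀ this
  linear_combination -d1

theorem five_case {K : Type*} [Field K] (h5 : (5:K)=0) {n : ℕ} (hn : 1 ≤ n) 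
   (H : ∀ A : Matrix (Fin n) (Fin n) ℤ, ∃ E F G : Matrix (Fin n) (Fin n) K, E*E=E ∧ F*F=F ∧ G*G=G ∧ A.map (Int.cast : ℤ → K) = E+F+G) : False := by
  have h2 : (2:K) ≠ 0 := by intro h; exact one_ne_zero (α := K) (by linear_combination h5 - 2*h)
  have h3 : (3:K) ≠ 0 := by intro h; exact one_ne_zero (α := K) (by linear_combination 2*h - h5)
  have h11 : (-1:K) ≠ 1 := by intro h; apply h2; linear_combination -h
  rcases Nat.even_or_odd n with hev | hodd
  · let i : Fin n := ⟨0, hn⟩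
    obtain ⟨E, F, G, hE, hF, hG, h⟩ := H (Matrix.diagonal (fun _ => 4) + Matrix.single i i 2)
    have h : (4:K)•(1 : Matrix (Fin n) (Fin n) K) + Matrix.single i i 2 = E+F+G := by
      rw [← h]; ext a b; simp [Matrix.single_apply, Matrix.one_apply, Matrix.diagonal_apply, apply_ite (Int.cast : ℤ → K)]
    obtain ⟨P, B, C, hP, hP0, hPB, hPS, hPD, hSS⟩ := five_alg h5 h2 h3 hE hF hG (N := Matrix.single i i 2) 
      (by simp) (by intro h; simpa [h2] using congrFun (congrFun h i) i) (G i i) (by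
        rw [Matrix.single_mul_mul_single]; simp
        try ring_nf) h
    obtain ⟨h1, hD⟩ := anti hE hF
    have := parity h2 _ _ P h1 hD hP hPS hPD hSS
    obtain ⟨U, V, huv⟩ : ∃ (U : Matrix (Fin n) (Fin 1) K) (V : Matrix (Fin 1) (Fin n) K), P = U * V := by
      refine ⟨B * (Matrix.single i 0 2 : Matrix (Fin n) (Fin 1) K), (Matrix.single 0 i 1 : Matrix (Fin 1) (Fin n) K) * C, ?_⟩
      have : (Matrix.single i i 2 : Matrix (Fin n) (Fin n) K) =
          (Matrix.single i 0 2 : Matrix (Fin n) (Fin 1) K) *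
          (Matrix.single 0 i 1 : Matrix (Fin 1) (Fin n) K) := by simp
      rw [hPB, this]
      simp only [Matrix.mul_assoc]
    have hVU : V * U = ((V*U) 0 0) • 1 := by
      ext a b; fin_cases a; fin_cases b; simp
    have ht : (V*U) 0 0 = 1 := by
      have : ((V*U) 0 0) • P = (1:K) • P := by
        rw [one_smul]
        nth_rewrite 2 [← hP]
        rw [huv, Matrix.mul_assoc, ← Matrix.mul_assoc V, hVU]
        simp
      exact smul_left_injective K hP0 this
    have hdet : (1 - (2:K)•P).det = -1 := by
      rw [huv, ← Matrix.smul_mul, Matrix.det_one_sub_mul_comm]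
      simp [Matrix.det_fin_one, ht]; norm_num
    rw [hdet, hev.neg_one_pow, one_mul] at this
    exact h11 this
  · obtain ⟨E, F, G, hE, hF, hG, h⟩ := H (Matrix.diagonal (fun _ => 4))
    have h : (4:K)•(1 : Matrix (Fin n) (Fin n) K) = E+F+G := by
      rw [← h]; ext a b; simp [Matrix.one_apply, Matrix.diagonal_apply, apply_ite (Int.cast : ℤ → K)]
    obtain ⟨h1, hD⟩ := anti hE hF
    have hG' : G = (3:K)•1 - (E+F-1) := by linear_combination (norm := module) -h
    have := parity h2 _ _ 0 h1 hD (by simp) (by simp) (by simp) (by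
      generalize E + F - 1 = S at *
      rw [hG'] at hG
      simp only [mul_add, add_mul, mul_sub, sub_mul, mul_smul_comm, smul_mul_assoc, mul_one, one_mul] at hG
      have : S*S = (5:K)•S - (6:K)•1 := by linear_combination (norm := module) hG
      have h6 : (6:K) = 1 := by linear_combination h5
      rw [sub_zero, mul_one, this, h5, h6]; simp)
    rw [hodd.neg_one_pow] at this
    simp at this
    exact h11 this


theorem trace_idem {K : Type*} [Field K] {n : ℕ} (E : Matrix (Fin n) (Fin n) K) (h : E*E=E) :
    ∃ m : ℕ, E.trace = m := by
  have h' : IsIdempotentElem (Matrix.toLin' E) := by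
    unfold IsIdempotentElem
    rw [Module.End.mul_eq_comp, ← Matrix.toLin'_mul, h]
  refine ⟨Module.finrank K (LinearMap.range (Matrix.toLin' E)), ?_⟩
  · rw [← Matrix.trace_toLin'_eq E]
    exact (LinearMap.isProj_range_iff_isIdempotentElem _).mpr h' |>.trace

theorem forward (R : Type*) [CommRing R] [IsReduced R]
    (n : ℕ) (hn : 1 ≤ n) (H : ∀ A : Matrix (Fin n) (Fin n) R,
      ∃ E₁ E₂ E₃ : Matrix (Fin n) (Fin n) R,
        E₁ * E₁ = E₁ ∧ E₂ * E₂ = E₂ ∧ E₃ * E₃ = E₃ ∧ A = E₁ + E₂ + E₃) (a : R) : a^3 = a := by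
  rw [← sub_eq_zero]
  apply IsReduced.eq_zero
  rw [← mem_nilradical, nilradical_eq_sInf, Ideal.mem_sInf]
  intro P hP
  have hP : P.IsPrime := hP
  let K := FractionRing (R ⧸ P)
  let f : R →+* K := (algebraMap (R ⧸ P) K).comp (Ideal.Quotient.mk P)
  have hf : ∀ x, f x = 0 → x ∈ P := by
    intro x hx
    rw [← Ideal.Quotient.eq_zero_iff_mem]
    exact (IsFractionRing.injective (R ⧸ P) K) (by simpa [f] using hx)
  apply hf
  have HK : ∀ A : Matrix (Fin n) (Fin n) R,
      ∃ E₁ E₂ E₃ : Matrix (Fin n) (Fin n) K,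
        E₁ * E₁ = E₁ ∧ E₂ * E₂ = E₂ ∧ E₃ * E₃ = E₃ ∧ A.map f = E₁ + E₂ + E₃ := by
    intro A
    obtain ⟨E, F, G, hE, hF, hG, h⟩ := H A
    refine ⟨E.map f, F.map f, G.map f, ?_, ?_, ?_, ?_⟩
    · rw [← Matrix.map_mul, hE]
    · rw [← Matrix.map_mul, hF]
    · rw [← Matrix.map_mul, hG]
    · rw [h]; ext i j; simp
  have HZ : ∀ A : Matrix (Fin n) (Fin n) ℤ, ∃ E F G : Matrix (Fin n) (Fin n) K, E*E=E ∧ F*F=F ∧ G*G=G ∧ A.map (Int.cast : ℤ → K) = E+F+G := by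
    intro A
    obtain ⟨E, F, G, hE, hF, hG, h⟩ := HK (A.map (Int.cast : ℤ → R))
    refine ⟨E, F, G, hE, hF, hG, ?_⟩
    rw [← h]; ext i j; simp
  have hchar : (2:K) = 0 ∨ (3:K) = 0 := by
    by_contra! hc
    by_cases h5 : (5:K) = 0
    · exact five_case h5 hn HZ
    · obtain ⟨E, F, G, hE, hF, hG, h⟩ := HZ (Matrix.diagonal (fun _ => 4))
      have : Nonempty (Fin n) := ⟨⟨0, hn⟩⟩
      refine four_case (K := K) hc.1 hc.2 h5 hE hF hG ?_
      rw [← h]; ext a b; simp [Matrix.one_apply, Matrix.diagonal_apply, apply_ite (Int.cast : ℤ → K)]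
  let i : Fin n := ⟨0, hn⟩
  obtain ⟨E, F, G, hE, hF, hG, h⟩ := HK (Matrix.single i i a)
  obtain ⟨m1, h1⟩ := trace_idem E hE
  obtain ⟨m2, h2⟩ := trace_idem F hF
  obtain ⟨m3, h3⟩ := trace_idem G hG
  have ht : f a = ((m1 + m2 + m3 : ℕ) : K) := by
    have := congrArg Matrix.trace h
    rw [Matrix.trace_add, Matrix.trace_add, h1, h2, h3] at this
    push_cast
    rw [← this]
    have : (Matrix.single i i a).map f = Matrix.single i i (f a) := by
      simp
    rw [this]; simp
  rw [map_sub, map_pow, ht]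
  generalize m1 + m2 + m3 = m
  induction m with
  | zero => simp
  | succ m ih =>
    push_cast
    rcases hchar with h | h
    · obtain ⟨c, hc⟩ := Nat.even_mul_succ_self m
      have hc' : (m:K) * (m+1) = c + c := by
        have := congrArg (Nat.cast : ℕ → K) hc
        rw [Nat.cast_mul] at this
        push_cast at this
        exact this
      linear_combination ih + 3 * hc' + 3 * c * h
    · linear_combination ih + ((m:K)^2 + m) * h

end Forward

section Backward
theorem core {K V : Type*} [Field K] [AddCommGroup V] [Module K V] {n : ℕ} (hn : 1 ≤ n)
    (b : Module.Basis (Fin n) K V) (A : Module.End K V) (g h : K) (hg : g*g=g) (hh : h*h=h)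
    (hA : ∀ (i : Fin n) (hi : i.1+1 < n), A (b i) = b ⟨i.1+1, hi⟩ + (if i.1 = 0 then 1+g else 1) • b i)
    (ht : LinearMap.trace K V A = n + g + h) :
    ∃ E F G : Module.End K V, E*E=E ∧ F*F=F ∧ G*G=G ∧ A = E+F+G := by
  classical
  let e : ℕ → Fin n → V := fun par i =>
    if i.1 % 2 = par then (if hi : i.1+1 < n then b i + b ⟨i.1+1, hi⟩ else h • b i)
    else (if i.1 = 0 then g • b i else 0)
  let E : ℕ → Module.End K V := fun par => b.constr K (e par)
  have hEb : ∀ par i, E par (b i) = e par i := fun par i => by simp [E]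
  have hE : ∀ par, E par * E par = E par := by
    intro par
    apply b.ext
    intro i
    rw [Module.End.mul_apply, hEb]
    by_cases h1 : i.1 % 2 = par
    · by_cases hi : i.1+1 < n
      · have h2 : ¬ ((i.1+1) % 2 = par) := by omega
        simp [e, h1, hi, hEb, h2]
      · simp [e, h1, hi, hEb, smul_smul, hh]
    · by_cases h0 : i.1 = 0
      · have h1' : ¬ (0 = par) := by simpa [h0] using h1
        simp [e, h1', h0, hEb, smul_smul, hg]
      · simp [e, h1, h0, hEb]
  let l : Fin n := ⟨n-1, by omega⟩
  obtain ⟨G, hG⟩ : ∃ G, G = A - E 0 - E 1 := ⟨_, rfl⟩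
  have hG0 : ∀ i : Fin n, i ≠ l → G (b i) = 0 := by
    intro i hil
    have hi : i.1 + 1 < n := by
      have : i.1 ≠ n-1 := fun h => hil (Fin.ext h)
      omega
    rw [hG, LinearMap.sub_apply, LinearMap.sub_apply, hEb, hEb, hA i hi]
    rcases Nat.mod_two_eq_zero_or_one i.1 with h2 | h2
    · by_cases h0 : i.1 = 0
      · simp [e, h0, show 0+1 < n by omega]; module
      · simp [e, h2, h0, hi]; abel
    · have h0 : i.1 ≠ 0 := by omega
      simp [e, h2, h0, hi]; abel
  have htE : LinearMap.trace K V (E 0 + E 1) = (n:K) - 1 + g + h := by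
    rw [LinearMap.trace_eq_matrix_trace K b, Matrix.trace]
    have : ∀ i : Fin n, Matrix.diag (LinearMap.toMatrix b b (E 0 + E 1)) i =
        1 + (if i = ⟨0, hn⟩ then g else 0) + (if i = l then h - 1 else 0) := by
      intro i
      rw [Matrix.diag_apply, LinearMap.toMatrix_apply, LinearMap.add_apply, hEb, hEb]
      have e1 : (i = l) ↔ ¬ (i.1 + 1 < n) := by simp [l, Fin.ext_iff]; omega
      have e2 : (i = ⟨0, hn⟩) ↔ i.1 = 0 := by simp [Fin.ext_iff]
      simp only [e1, e2]
      have e3 : ∀ hi : i.1+1 < n, (⟨i.1+1, hi⟩ : Fin n) ≠ i := by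
        intro hi; simp [Fin.ext_iff]
      rcases Nat.mod_two_eq_zero_or_one i.1 with h2 | h2
      · by_cases h0 : i.1 = 0
        · obtain rfl : i = ⟨0, hn⟩ := e2.mpr h0
          by_cases hi : 0 + 1 < n
          · have e4 := e3 hi
            simp only [zero_add] at hi e4
            simp [e, hi, e4, Finsupp.single_apply]
          · simp only [zero_add] at hi
            simp [e, hi]; ring
        · by_cases hi : i.1 + 1 < n
          · simp [e, h2, h0, hi, Finsupp.single_apply, e3 hi]
          · simp [e, h2, h0, hi]
      · have h0 : i.1 ≠ 0 := by omega
        by_cases hi : i.1 + 1 < n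
        · simp [e, h2, h0, hi, Finsupp.single_apply, e3 hi]
        · simp [e, h2, h0, hi]
    simp only [this, Finset.sum_add_distrib]
    simp
    ring
  have htG : LinearMap.trace K V G = 1 := by
    rw [hG, sub_sub, map_sub, ht, htE]; ring
  have hGx : ∀ x, G x = b.repr x l • G (b l) := by
    intro x
    conv_lhs => rw [← b.sum_repr x]
    rw [map_sum, Finset.sum_eq_single l]
    · simp
    · intro i _ hi; simp [hG0 i hi]
    · simp
  have hl : b.repr (G (b l)) l = 1 := by
    rw [LinearMap.trace_eq_matrix_trace K b, Matrix.trace, Finset.sum_eq_single l] at htG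
    · rwa [Matrix.diag_apply, LinearMap.toMatrix_apply] at htG
    · intro i _ hi
      rw [Matrix.diag_apply, LinearMap.toMatrix_apply, hG0 i hi]; simp
    · simp
  refine ⟨E 0, E 1, G, hE 0, hE 1, ?_, ?_⟩
  · ext x
    rw [Module.End.mul_apply, hGx (G x), hGx x]
    simp [hl]
  · rw [hG]; abel

/-- The statement that `X` acts as a sum of three idempotents. -/
def GoodMod (K V : Type*) [Field K] [AddCommGroup V] [Module K V] (A : Module.End K V) : Prop :=
  ∃ E F G : Module.End K V, E*E=E ∧ F*F=F ∧ G*G=G ∧ A = E+F+G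

theorem GoodMod.conj {K V W : Type*} [Field K] [AddCommGroup V] [Module K V] [AddCommGroup W] [Module K W]
   (φ : V ≃ₗ[K] W) {A : Module.End K V} {B : Module.End K W} (hAB : ∀ x, φ (A x) = B (φ x))
   (h : GoodMod K W B) : GoodMod K V A := by
  obtain ⟨E, F, G, hE, hF, hG, h⟩ := h
  let c := φ.symm.conjRingEquiv
  refine ⟨c E, c F, c G, by rw [← map_mul, hE], by rw [← map_mul, hF], by rw [← map_mul, hG], ?_⟩
  rw [← map_add, ← map_add, ← h]
  ext x
  simp [c, LinearEquiv.conjRingEquiv, ← hAB]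

theorem GoodMod.pi {K ι : Type*} [Field K] [DecidableEq ι] {V : ι → Type*} [∀ i, AddCommGroup (V i)]
    [∀ i, Module K (V i)] (A : ∀ i, Module.End K (V i)) (h : ∀ i, GoodMod K (V i) (A i)) :
    GoodMod K (DirectSum ι V) (DirectSum.lmap A) := by
  choose E F G hE hF hG h using h
  refine ⟨DirectSum.lmap E, DirectSum.lmap F, DirectSum.lmap G, ?_, ?_, ?_, ?_⟩
  · rw [Module.End.mul_eq_comp, ← DirectSum.lmap_comp]
    congr 1; ext1 i; exact hE i
  · rw [Module.End.mul_eq_comp, ← DirectSum.lmap_comp]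
    congr 1; ext1 i; exact hF i
  · rw [Module.End.mul_eq_comp, ← DirectSum.lmap_comp]
    congr 1; ext1 i; exact hG i
  · ext i x j; simp [h]

theorem exists_gh {K : Type*} [Field K] (hK : ∀ x : K, x^3=x) (t : K) : ∃ g h : K, g*g=g ∧ h*h=h ∧ t = g+h := by
  have h6 := hK 2
  have : t = 0 ∨ t = 1 ∨ t = -1 := by have := hK t; grind
  rcases this with h | h | h
  · exact ⟨0, 0, by simp, by simp, by simp [h]⟩
  · exact ⟨1, 0, by simp, by simp, by simp [h]⟩
  · have : (2:K) = 0 ∨ (3:K) = 0 := by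
      have : (2:K) * 3 = 0 := by linear_combination h6
      exact mul_eq_zero.mp this
    rcases this with h2 | h3
    · exact ⟨1, 0, by simp, by simp, by rw [h]; linear_combination -h2⟩
    · exact ⟨1, 1, by simp, by simp, by rw [h]; linear_combination -h3⟩


open Polynomial

/-- Polynomials used for the adapted basis. -/
noncomputable def adPoly {K : Type*} [Field K] (g : K) : ℕ → K[X]
  | 0 => 1
  | i+1 => (X - C (1+g)) * (X - C 1)^i

theorem adPoly_degree {K : Type*} [Field K] (g : K) (i : ℕ) : (adPoly g i).degree = i := by
  cases i with
  | zero => simp [adPoly]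
  | succ i => 
    rw [adPoly, degree_mul, degree_pow, degree_X_sub_C, degree_X_sub_C]
    simp [add_comm]

theorem adPoly_mul {K : Type*} [Field K] (g : K) (i : ℕ) :
    X * adPoly g i = adPoly g (i+1) + (if i = 0 then 1+g else 1 : K) • adPoly g i := by
  cases i with
  | zero => simp [adPoly, smul_eq_C_mul]
  | succ i => simp [adPoly]; ring

theorem cyclic_aux {K : Type*} [Field K] (hK : ∀ x : K, x^3=x) (q : K[X]) (hq : q ≠ 0)
    {M : Type*} [AddCommGroup M] [Module K M] (mk : K[X] →ₗ[K] M) (T : Module.End K M)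
    (hmk : ∀ p, mk p = 0 ↔ q ∣ p) (hX : ∀ p, T (mk p) = mk (X * p))
    (hsurj : Function.Surjective mk) : GoodMod K M T := by
  rcases Nat.eq_zero_or_pos q.natDegree with h0 | hn
  · have : Subsingleton M := by
      refine ⟨fun a b => ?_⟩
      obtain ⟨a, rfl⟩ := hsurj a
      obtain ⟨b, rfl⟩ := hsurj b
      rw [← sub_eq_zero, ← map_sub, hmk]
      have : IsUnit q := by
        rw [Polynomial.isUnit_iff_degree_eq_zero, degree_eq_natDegree hq, h0]; rfl
      exact this.dvd
    exact ⟨0, 0, 0, by simp, by simp, by simp, LinearMap.ext fun x => Subsingleton.elim _ _⟩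
  · obtain ⟨g, h, hg, hh, ht⟩ := exists_gh hK (LinearMap.trace K _ T - q.natDegree)
    let S : Polynomial.Sequence K := ⟨adPoly g, adPoly_degree g⟩
    have hS : ∀ i, S i = adPoly g i := fun i => rfl
    have hspan : Submodule.span K (Set.range fun i : Fin q.natDegree => S i) = degreeLT K q.natDegree := by
      rw [← S.span_degreeLT (m := q.natDegree) (fun i _ => by
        rw [isUnit_iff_ne_zero]; exact leadingCoeff_ne_zero.mpr (S.ne_zero i))]
      congr 1
      ext p; simp [Fin.exists_iff]
    have hli : LinearIndependent K (fun i : Fin q.natDegree => mk (S i)) := by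
      have h1 : LinearIndependent K (fun i : Fin q.natDegree => S i) :=
        S.linearIndependent.comp _ Fin.val_injective
      refine h1.map ?_
      rw [hspan, Submodule.disjoint_def]
      intro p hp hp'
      rw [LinearMap.mem_ker, hmk] at hp'
      rw [mem_degreeLT, ← degree_eq_natDegree hq] at hp
      exact eq_zero_of_dvd_of_degree_lt hp' hp
    have hsp : ⊤ ≤ Submodule.span K (Set.range (fun i : Fin q.natDegree => mk (S i))) := by
      intro x _
      obtain ⟨p, rfl⟩ := hsurj x
      have : mk p = mk (p % q) := by
        rw [← sub_eq_zero, ← map_sub, hmk]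
        exact ⟨p / q, by linear_combination -EuclideanDomain.div_add_mod p q⟩
      rw [this]
      have hr : Set.range (fun i : Fin q.natDegree => mk (S i)) = mk '' Set.range (fun i : Fin q.natDegree => S i) := by
        rw [← Set.range_comp]; rfl
      rw [hr, Submodule.span_image, hspan]
      refine Submodule.mem_map_of_mem ?_
      rw [mem_degreeLT, ← degree_eq_natDegree hq]
      exact degree_mod_lt p hq
    let b := Module.Basis.mk hli hsp
    have hb : ∀ i, b i = mk (S i) := fun i => by simp [b]
    refine core hn b _ g h hg hh ?_ (by linear_combination ht)
    intro i hi
    rw [hb, hb, hX, hS, adPoly_mul, map_add, map_smul]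

theorem cyclic {K : Type*} [Field K] (hK : ∀ x : K, x^3=x) (q : K[X]) (hq : q ≠ 0) :
    GoodMod K (K[X] ⧸ Submodule.span K[X] {q}) (Algebra.lsmul K K _ (X : K[X])) := by
  let mk : K[X] →ₗ[K] (K[X] ⧸ Submodule.span K[X] {q}) := (Submodule.mkQ (Submodule.span K[X] {q})).restrictScalars K
  have hmk : ∀ p, mk p = 0 ↔ q ∣ p := by
    intro p
    simp only [mk, LinearMap.restrictScalars_apply, Submodule.mkQ_apply]
    rw [Submodule.Quotient.mk_eq_zero]
    exact Ideal.mem_span_singleton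
  have hX : ∀ p, (Algebra.lsmul K K (K[X] ⧸ Submodule.span K[X] {q}) (X : K[X])) (mk p) = mk (X * p) := fun p => rfl
  have hsurj : Function.Surjective mk := by
    intro y
    obtain ⟨p, hp⟩ := Submodule.mkQ_surjective (Submodule.span K[X] {q}) y
    exact ⟨p, by simpa only [mk, LinearMap.restrictScalars_apply] using hp⟩
  exact cyclic_aux hK q hq mk _ hmk hX hsurj

theorem field_case {K : Type*} [Field K] (hK : ∀ x : K, x^3=x) {n : ℕ} (A : Matrix (Fin n) (Fin n) K) :
    ∃ E F G : Matrix (Fin n) (Fin n) K, E*E=E ∧ F*F=F ∧ G*G=G ∧ A = E+F+G := by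
  let a : Module.End K (Fin n → K) := Matrix.toLin' A
  have key : GoodMod K (Fin n → K) a := by
    have htor : Module.IsTorsion K[X] (Module.AEval K (Fin n → K) a) := Module.AEval.isTorsion_of_finiteDimensional K _ a
    classical
    obtain ⟨ι, _, p, hp, e, ⟨φ⟩⟩ := Module.equiv_directSum_of_isTorsion htor
    have h1 := GoodMod.pi _ (fun i => cyclic hK (p i ^ e i) (pow_ne_zero _ (hp i).ne_zero))
    refine GoodMod.conj ((Module.AEval.of K (Fin n → K) a).trans (φ.restrictScalars K)) ?_ h1
    intro x
    have : Module.AEval.of K (Fin n → K) a (a x) = (X : K[X]) • Module.AEval.of K (Fin n → K) a x := by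
      rw [Module.AEval.X_smul_of]; rfl
    simp only [LinearEquiv.trans_apply, LinearEquiv.restrictScalars_apply, this, map_smul]
    ext i
    simp
    exact DirectSum.smul_apply ..
  obtain ⟨E, F, G, hE, hF, hG, h⟩ := key
  let c := (LinearMap.toMatrixAlgEquiv' (R := K) (n := Fin n))
  refine ⟨c E, c F, c G, by rw [← map_mul, hE], by rw [← map_mul, hF], by rw [← map_mul, hG], ?_⟩
  rw [← map_add, ← map_add, ← h]
  simp only [a, c]
  exact (LinearMap.toMatrix'_toLin' A).symm

theorem finite_case {R : Type*} [CommRing R] [Finite R] (hR : ∀ x : R, x^3=x) {n : ℕ} (A : Matrix (Fin n) (Fin n) R) :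
    ∃ E F G : Matrix (Fin n) (Fin n) R, E*E=E ∧ F*F=F ∧ G*G=G ∧ A = E+F+G := by
  have : IsReduced R := by
    rw [isReduced_iff_pow_one_lt 2 (by norm_num)]
    intro x hx
    rw [← hR x, pow_succ, hx, zero_mul]
  let φ := IsArtinianRing.equivPi R
  have H : ∀ m : MaximalSpectrum R, ∃ E F G : Matrix (Fin n) (Fin n) (R ⧸ m.asIdeal), E*E=E ∧ F*F=F ∧ G*G=G ∧ A.map (Ideal.Quotient.mk m.asIdeal) = E+F+G := by
    intro m
    let _ := Ideal.Quotient.field m.asIdeal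
    refine field_case ?_ _
    intro x
    obtain ⟨x, rfl⟩ := Ideal.Quotient.mk_surjective x
    rw [← map_pow, hR]
  choose E F G hE hF hG h using H
  have main : ∀ E : ∀ m : MaximalSpectrum R, Matrix (Fin n) (Fin n) (R ⧸ m.asIdeal), (∀ m, E m * E m = E m) →
     (Matrix.of fun i j => φ.symm (fun m => E m i j)) * (Matrix.of fun i j => φ.symm (fun m => E m i j)) = (Matrix.of fun i j => φ.symm (fun m => E m i j)) := by
    intro E hE
    ext i j
    apply φ.injective
    ext m
    have := congrFun (congrFun (hE m) i) j
    simpa [Matrix.mul_apply] using this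
  refine ⟨_, _, _, main E hE, main F hF, main G hG, ?_⟩
  ext i j
  apply φ.injective
  ext m
  have := congrFun (congrFun (h m) i) j
  have hφ : ∀ x m, φ x m = Ideal.Quotient.mk m.asIdeal x := fun _ _ => rfl
  rw [Matrix.add_apply, Matrix.add_apply, map_add, map_add]
  simp only [Matrix.of_apply, AlgEquiv.apply_symm_apply, Pi.add_apply]
  exact this

theorem backward {R : Type*} [CommRing R] (hR : ∀ x : R, x^3=x) {n : ℕ} (A : Matrix (Fin n) (Fin n) R) :
    ∃ E F G : Matrix (Fin n) (Fin n) R, E*E=E ∧ F*F=F ∧ G*G=G ∧ A = E+F+G := by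
  let s : Set R := Set.range (fun x : Fin n × Fin n => A x.1 x.2)
  let S := Algebra.adjoin ℤ s
  have hfin : Module.Finite ℤ S := by
    apply Algebra.finite_adjoin_of_finite_of_isIntegral (Set.finite_range _)
    intro x _
    exact ⟨X^3 - X, by monicity!, by simp [hR x]⟩
  have hS : ∀ x : S, x^3 = x := fun x => Subtype.ext (by simpa using hR x)
  have : Finite S := by
    refine Module.finite_of_fg_torsion S ?_
    intro x
    refine ⟨⟨6, by simp⟩, ?_⟩
    have := hS 2
    have h6 : (6:S) = 0 := by linear_combination this
    rw [Submonoid.smul_def]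
    change (6:ℤ) • x = 0
    rw [zsmul_eq_mul]
    push_cast
    rw [h6, zero_mul]
  obtain ⟨E, F, G, hE, hF, hG, h⟩ := finite_case hS (n := n) (Matrix.of fun i j => ⟨A i j, Algebra.subset_adjoin ⟨(i,j), rfl⟩⟩)
  let f : S →+* R := S.val.toRingHom
  refine ⟨E.map f, F.map f, G.map f, by rw [← Matrix.map_mul, hE], by rw [← Matrix.map_mul, hF], by rw [← Matrix.map_mul, hG], ?_⟩
  have := congrArg (fun M => M.map f) h
  rw [Matrix.map_add _ (map_add f), Matrix.map_add _ (map_add f)] at this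
  rw [← this]
  ext i j; simp [f]

end Backward

/-- For a commutative reduced ring `R` and `n ≥ 1`, every matrix in `M_n(R)` is a sum of
three idempotent matrices if and only if `R` satisfies the identity `x^3 = x`. -/
theorem matrix_sum_three_idempotents_reduced_iff (R : Type*) [CommRing R] [IsReduced R]
    (n : ℕ) (hn : 1 ≤ n) :
    (∀ A : Matrix (Fin n) (Fin n) R,
      ∃ E₁ E₂ E₃ : Matrix (Fin n) (Fin n) R,
        E₁ * E₁ = E₁ ∧ E₂ * E₂ = E₂ ∧ E₃ * E₃ = E₃ ∧ A = E₁ + E₂ + E₃) ↔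
    (∀ a : R, a ^ 3 = a) := by
  
  exact ⟨fun H a => forward R n hn H a, fun h A => backward h A⟩
end

section
/- The matrix [[1, 1], [1, 0]] in M_2(Z_4) is not a sum of three idempotent matrices. -/
/-- Idempotents over `ZMod 4`: zero, identity, or trace one and determinant zero. -/
theorem idem_cases : ∀ a b c d : ZMod 4, a * a + b * c = a → a * b + b * d = b →
    c * a + d * c = c → c * b + d * d = d →
    (a = 0 ∧ b = 0 ∧ c = 0 ∧ d = 0) ∨ (a = 1 ∧ b = 0 ∧ c = 0 ∧ d = 1) ∨
      (a + d = 1 ∧ a * d = b * c) := by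
  decide +kernel

theorem idem_matrix (E : Matrix (Fin 2) (Fin 2) (ZMod 4)) (h : E * E = E) :
    E = 0 ∨ E = 1 ∨ (E.trace = 1 ∧ E.det = 0) := by
  have h' := fun i j => congrFun (congrFun h i) j
  simp only [Matrix.mul_apply, Fin.sum_univ_two] at h'
  rcases idem_cases _ _ _ _ (h' 0 0) (h' 0 1) (h' 1 0) (h' 1 1) with
    ⟨h1, h2, h3, h4⟩ | ⟨h1, h2, h3, h4⟩ | ⟨h1, h2⟩
  · left; ext i j; fin_cases i <;> fin_cases j <;> simp [h1, h2, h3, h4]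
  · right; left; ext i j; fin_cases i <;> fin_cases j <;> simp [h1, h2, h3, h4]
  · right; right
    rw [Matrix.trace_fin_two, Matrix.det_fin_two]
    exact ⟨h1, by rw [h2, sub_self]⟩

/-- The matrix `[[1, 1], [1, 0]]` in `M_2(ℤ/4)` is not a sum of three idempotent
matrices. -/
theorem matrix_zmod4_not_sum_three_idempotents :
    ¬ ∃ E₁ E₂ E₃ : Matrix (Fin 2) (Fin 2) (ZMod 4),
      E₁ * E₁ = E₁ ∧ E₂ * E₂ = E₂ ∧ E₃ * E₃ = E₃ ∧
        !![(1 : ZMod 4), 1; 1, 0] = E₁ + E₂ + E₃ := by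
  rintro ⟨E, F, G, hE, hF, hG, h⟩
  have ht := congrArg Matrix.trace h
  rw [Matrix.trace_add, Matrix.trace_add] at ht
  -- a rank-one summand cannot be `M - k` for a scalar `k ∈ {0, 1, 2}`
  have key : ∀ (X : Matrix (Fin 2) (Fin 2) (ZMod 4)) (k : ZMod 4),
      X = !![1 - k, 1; 1, -k] → X.trace = 1 → X.det = 0 → False := by
    rintro X k rfl h1 h2
    rw [Matrix.trace_fin_two] at h1
    rw [Matrix.det_fin_two] at h2
    simp at h1 h2
    revert k
    decide
  have z_eq : (0 : Matrix (Fin 2) (Fin 2) (ZMod 4)) = !![0, 0; 0, 0] := by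
    ext i j; fin_cases i <;> fin_cases j <;> rfl
  have sc : ∀ k : ZMod 4, !![1 - k, 1; 1, -k] = !![(1 : ZMod 4), 1; 1, 0] - !![k, 0; 0, k] := by
    intro k; ext i j; fin_cases i <;> fin_cases j <;> simp
  have tM : Matrix.trace !![(1 : ZMod 4), 1; 1, 0] = 1 := by simp
  have t1 : Matrix.trace (1 : Matrix (Fin 2) (Fin 2) (ZMod 4)) = 2 := by
    simp [Matrix.trace_fin_two]
  have k0 : !![(0 : ZMod 4), 0; 0, 0] = 0 := z_eq.symm
  have k2 : !![(2 : ZMod 4), 0; 0, 2] = 1 + 1 := by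
    ext i j; fin_cases i <;> fin_cases j <;> decide
  rw [tM] at ht
  rcases idem_matrix E hE with rfl | rfl | ⟨e1, e2⟩ <;>
  rcases idem_matrix F hF with rfl | rfl | ⟨f1, f2⟩ <;>
  rcases idem_matrix G hG with rfl | rfl | ⟨g1, g2⟩ <;>
  (try rw [e1] at ht) <;> (try rw [f1] at ht) <;> (try rw [g1] at ht) <;>
  (try rw [t1] at ht) <;> (try simp only [Matrix.trace_zero] at ht) <;>
  first
  | (exfalso; revert ht; decide)
  | (refine key E 0 ?_ e1 e2; rw [sc, k0, h]; abel1)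
  | (refine key F 0 ?_ f1 f2; rw [sc, k0, h]; abel1)
  | (refine key G 0 ?_ g1 g2; rw [sc, k0, h]; abel1)
  | (refine key E 2 ?_ e1 e2; rw [sc, k2, h]; abel1)
  | (refine key F 2 ?_ f1 f2; rw [sc, k2, h]; abel1)
  | (refine key G 2 ?_ g1 g2; rw [sc, k2, h]; abel1)
end

section
/- Let R be a commutative ring. The following are equivalent: (1) every matrix in M_2(R) is a sum of three idempotent matrices; (2) for every n ≥ 1, every matrix in M_n(R) is a sum of three idempotent matrices; (3) R satisfies the identity x^3 = x (equivalently, R is isomorphic to A × B where A is Boolean and B is zero or a subdirect product of copies of Z_3). -/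
open Polynomial

/-- An element of a ring is a sum of three idempotents. -/
def SumThreeIdem {S : Type*} [Ring S] (a : S) : Prop :=
  ∃ e₁ e₂ e₃ : S, e₁ * e₁ = e₁ ∧ e₂ * e₂ = e₂ ∧ e₃ * e₃ = e₃ ∧ a = e₁ + e₂ + e₃

theorem SumThreeIdem.map {S T : Type*} [Ring S] [Ring T] (φ : S →+* T) {a : S}
    (h : SumThreeIdem a) : SumThreeIdem (φ a) := by
  obtain ⟨e, f, g, he, hf, hg, rfl⟩ := h
  exact ⟨φ e, φ f, φ g, by rw [← map_mul, he], by rw [← map_mul, hf], by rw [← map_mul, hg],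
    by simp⟩

theorem three_idem_of_basis {K M : Type*} [Field K] [AddCommGroup M] [Module K M] (m : ℕ)
    (B : Module.Basis (Fin (m + 2)) K M) (b : ℕ → M) (hb : ∀ i : Fin (m + 2), B i = b i)
    (s s' : K) (hs : s * s = s) (hs' : s' * s' = s') (f : Module.End K M)
    (h0 : f (b 0) = (1 + s') • b 0 + b 1)
    (h1 : ∀ i, i + 1 < m + 1 → f (b (i + 1)) = b (i + 1) + b (i + 2))
    (hl : f (b (m + 1)) - (1 + s) • b (m + 1) ∈ Submodule.span K (b '' {i | i < m + 1})) :
    SumThreeIdem f := by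
  classical
  let α : ℕ → K := fun i => if Even i then (if i = m + 1 then s else 1) else 0
  let β : ℕ → K := fun i => if Even i then (if i = 0 then s' else 0) else
    (if i = m + 1 then s else 1)
  let E : Module.End K M := B.constr K (fun i : Fin (m + 2) => α i • b i +
    if Even (i : ℕ) ∧ (i : ℕ) < m + 1 then b (i + 1) else 0)
  let F : Module.End K M := B.constr K (fun i : Fin (m + 2) => β i • b i +
    if ¬ Even (i : ℕ) ∧ (i : ℕ) < m + 1 then b (i + 1) else 0)
  have hE : ∀ i, i < m + 2 → E (b i) = α i • b i + if Even i ∧ i < m + 1 then b (i + 1) else 0 := by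
    intro i hi
    have := B.constr_basis K (fun i : Fin (m + 2) => α i • b i +
      if Even (i : ℕ) ∧ (i : ℕ) < m + 1 then b (i + 1) else 0) ⟨i, hi⟩
    rwa [hb] at this
  have hF : ∀ i, i < m + 2 → F (b i) = β i • b i +
      if ¬ Even i ∧ i < m + 1 then b (i + 1) else 0 := by
    intro i hi
    have := B.constr_basis K (fun i : Fin (m + 2) => β i • b i +
      if ¬ Even (i : ℕ) ∧ (i : ℕ) < m + 1 then b (i + 1) else 0) ⟨i, hi⟩
    rwa [hb] at this
  have hEE : E * E = E := by
    refine B.ext fun i => ?_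
    obtain ⟨i, hi⟩ := i
    rw [hb, Module.End.mul_apply]
    simp only
    rw [hE i hi, map_add, map_smul, hE i hi]
    by_cases hev : Even i
    · by_cases him : i < m + 1
      · have hne : i ≠ m + 1 := by omega
        have hodd : ¬ Even (i + 1) := by rw [Nat.even_add_one]; simpa using hev
        simp [hev, him, hE (i + 1) (by omega), α, hodd, hne]
      · have : i = m + 1 := by omega
        subst this
        simp [hev, α, smul_smul, hs]
    · simp [hev, α]
  have hFF : F * F = F := by
    refine B.ext fun i => ?_
    obtain ⟨i, hi⟩ := i
    rw [hb, Module.End.mul_apply]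
    simp only
    rw [hF i hi, map_add, map_smul, hF i hi]
    by_cases hev : Even i
    · by_cases hi0 : i = 0 <;> simp [hev, β, hi0, smul_smul, hs']
    · by_cases him : i < m + 1
      · have hne : i ≠ m + 1 := by omega
        have hodd : Even (i + 1) := by rw [Nat.even_add_one]; exact hev
        simp [hev, him, hF (i + 1) (by omega), β, hodd, hne]
      · have : i = m + 1 := by omega
        subst this
        simp [hev, β, smul_smul, hs]
  have hG0 : ∀ i, i < m + 1 → (f - E - F) (b i) = 0 := by
    intro i hi
    rw [LinearMap.sub_apply, LinearMap.sub_apply, hE i (by omega), hF i (by omega)]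
    have hne : i ≠ m + 1 := by omega
    rcases i with _ | i
    · rw [h0]
      simp [α, β, add_smul]
    · rw [h1 i hi]
      have hi' : i < m := by omega
      have hne' : i ≠ m := by omega
      by_cases hev : Even (i + 1) <;> simp [α, β, hev, hi', hne']
  have hGl : (f - E - F) (b (m + 1)) - b (m + 1) ∈ Submodule.span K (b '' {i | i < m + 1}) := by
    convert hl using 1
    rw [LinearMap.sub_apply, LinearMap.sub_apply, hE _ (by omega), hF _ (by omega)]
    by_cases hev : Even (m + 1) <;> simp [α, β, hev, add_smul] <;> abel
  have hGw : ∀ w ∈ Submodule.span K (b '' {i | i < m + 1}), (f - E - F) w = 0 := by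
    intro w hw
    have : Submodule.span K (b '' {i | i < m + 1}) ≤ LinearMap.ker (f - E - F) := by
      rw [Submodule.span_le]
      rintro _ ⟨i, hi, rfl⟩
      exact hG0 i hi
    exact this hw
  refine ⟨E, F, f - E - F, hEE, hFF, ?_, by abel⟩
  refine B.ext fun i => ?_
  obtain ⟨i, hi⟩ := i
  rw [hb, Module.End.mul_apply]
  simp only
  by_cases him : i < m + 1
  · rw [hG0 i him, map_zero]
  · have : i = m + 1 := by omega
    subst this
    have := hGw _ hGl
    rwa [map_sub, sub_eq_zero] at this

theorem mem_span_of_degree_lt {K : Type*} [Field K] (p : ℕ → K[X]) (hp : ∀ i, (p i).Monic)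
    (hd : ∀ i, (p i).natDegree = i) (k : ℕ) : ∀ r : K[X], r.degree < k →
    r ∈ Submodule.span K (p '' {i | i < k}) := by
  induction k with
  | zero =>
    intro r hr
    have : r = 0 := by
      rw [← Polynomial.degree_eq_bot]
      exact Nat.WithBot.lt_zero_iff.1 (by simpa using hr)
    rw [this]; exact Submodule.zero_mem _
  | succ k ih =>
    intro r hr
    have h1 : r - r.coeff k • p k ∈ Submodule.span K (p '' {i | i < k}) := by
      apply ih
      rw [Polynomial.degree_lt_iff_coeff_zero]
      intro j hj
      rcases hj.eq_or_lt with rfl | hj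
      · have : (p k).coeff k = 1 := by
          have := (hp k).coeff_natDegree
          rwa [hd] at this
        simp [this]
      · rw [coeff_sub, coeff_smul, (Polynomial.degree_lt_iff_coeff_zero _ _).1 hr j hj,
          coeff_eq_zero_of_natDegree_lt (p := p k) (by rw [hd]; exact hj)]
        simp
    have h2 : r.coeff k • p k ∈ Submodule.span K (p '' {i | i < k + 1}) :=
      Submodule.smul_mem _ _ (Submodule.subset_span ⟨k, by simp, rfl⟩)
    have h3 := Submodule.add_mem _
      (Submodule.span_mono (Set.image_mono (fun i (hi : i < k) => (by
        simp only [Set.mem_ofPred_eq]; omega : i ∈ {i | i < k + 1}))) h1) h2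
    simpa using h3

set_option maxHeartbeats 1000000 in
theorem three_idem_quotient {K : Type*} [Field K]
    (hK : ∀ c : K, ∃ s s' : K, s * s = s ∧ s' * s' = s' ∧ c = s + s') (q : K[X]) (hq : q.Monic) :
    SumThreeIdem (LinearMap.mulLeft K (Ideal.Quotient.mk (Ideal.span {q}) X)) := by
  have hqz : Ideal.Quotient.mk (Ideal.span {q}) q = 0 :=
    Ideal.Quotient.eq_zero_iff_mem.2 (Ideal.mem_span_singleton_self q)
  have hfin := finrank_quotient_span_eq_natDegree' hq
  have hmkC : ∀ (c : K) (r : K[X]), Ideal.Quotient.mk (Ideal.span {q}) (C c * r) =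
      c • Ideal.Quotient.mk (Ideal.span {q}) r := by
    intro c r
    rw [← smul_eq_C_mul]; rfl
  obtain hn | hn | ⟨m, hn⟩ : q.natDegree = 0 ∨ q.natDegree = 1 ∨ ∃ m, q.natDegree = m + 2 := by
    rcases h : q.natDegree with _ | _ | m
    · simp
    · simp
    · exact Or.inr (Or.inr ⟨m, rfl⟩)
  · have h1 : q = 1 := hq.natDegree_eq_zero.1 hn
    have hs : Subsingleton (K[X] ⧸ Ideal.span {q}) := by
      rw [Ideal.Quotient.subsingleton_iff, h1]; simp
    exact ⟨0, 0, 0, by simp, by simp, by simp, LinearMap.ext fun x => Subsingleton.elim _ _⟩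
  · obtain ⟨s, s', hs, hs', hc⟩ := hK (-q.coeff 0)
    have hX : Ideal.Quotient.mk (Ideal.span {q}) X = algebraMap K _ (s + s') := by
      have h1 : q = X + C (q.coeff 0) := hq.eq_X_add_C hn
      rw [← hc]
      have h2 : (X : K[X]) = q + C (-q.coeff 0) := by
        rw [C_neg]; linear_combination -h1
      have h3 := hmkC (-q.coeff 0) 1
      rw [mul_one, map_one] at h3
      rw [h2, map_add, hqz, zero_add, h3, Algebra.algebraMap_eq_smul_one]
    have : LinearMap.mulLeft K (Ideal.Quotient.mk (Ideal.span {q}) X) =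
        algebraMap K _ (s + s') := by
      refine LinearMap.ext fun x => ?_
      rw [LinearMap.mulLeft_apply, hX, Module.algebraMap_end_apply]
      exact (Algebra.smul_def _ _).symm
    rw [this, map_add]
    exact ⟨algebraMap K _ s, algebraMap K _ s', 0, by rw [← map_mul, hs], by rw [← map_mul, hs'],
      by simp, by simp⟩
  · obtain ⟨s, s', hs, hs', hc⟩ := hK (-q.coeff (m + 1) - (m + 2))
    let p : ℕ → K[X] := fun i => Nat.casesOn i 1 (fun i => (X - C (1 + s')) * (X - C 1) ^ i)
    have hp0 : p 0 = 1 := rfl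
    have hps : ∀ i, p (i + 1) = (X - C (1 + s')) * (X - C 1) ^ i := fun i => rfl
    have hpm : ∀ i, (p i).Monic := by
      rintro (_ | i)
      · exact monic_one
      · exact (monic_X_sub_C _).mul ((monic_X_sub_C _).pow _)
    have hpd : ∀ i, (p i).natDegree = i := by
      rintro (_ | i)
      · exact natDegree_one
      · rw [hps, (monic_X_sub_C _).natDegree_mul ((monic_X_sub_C _).pow _),
          (monic_X_sub_C _).natDegree_pow, natDegree_X_sub_C, natDegree_X_sub_C]; omega
    let b : ℕ → K[X] ⧸ Ideal.span {q} := fun i => Ideal.Quotient.mk _ (p i)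
    have hspan : ∀ (k : ℕ) (r : K[X]), r.degree < k → Ideal.Quotient.mk (Ideal.span {q}) r ∈
        Submodule.span K (b '' {i | i < k}) := by
      intro k r hr
      have h1 := Submodule.mem_map_of_mem (f := (Ideal.Quotient.mkₐ K (Ideal.span {q})).toLinearMap)
        (mem_span_of_degree_lt p hpm hpd k r hr)
      rw [Submodule.map_span, ← Set.image_comp] at h1
      exact h1
    have htop : ⊤ ≤ Submodule.span K (Set.range fun i : Fin (m + 2) => b i) := by
      intro x _
      obtain ⟨r, rfl⟩ := Ideal.Quotient.mk_surjective x
      have h1 : Ideal.Quotient.mk (Ideal.span {q}) r = Ideal.Quotient.mk (Ideal.span {q}) (r %ₘ q) := by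
        conv_lhs => rw [← modByMonic_add_div r q, map_add, map_mul, hqz, zero_mul, add_zero]
      rw [h1]
      have h2 := hspan (m + 2) (r %ₘ q) (by
        have := degree_modByMonic_lt r hq
        rwa [degree_eq_natDegree hq.ne_zero, hn] at this)
      refine Submodule.span_mono ?_ h2
      rintro _ ⟨i, hi, rfl⟩
      exact ⟨⟨i, hi⟩, rfl⟩
    have hcard : Fintype.card (Fin (m + 2)) = Module.finrank K (K[X] ⧸ Ideal.span {q}) := by
      rw [hfin, hn]; simp
    refine three_idem_of_basis m (basisOfTopLeSpanOfCardEqFinrank _ htop hcard) b (by simp)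
      s s' hs hs' _ ?_ ?_ ?_
    · simp only [b, LinearMap.mulLeft_apply]
      rw [← map_mul, ← hmkC, ← map_add, show p 1 = _ from hps 0, hp0]
      congr 1; ring
    · intro i _
      simp only [b, LinearMap.mulLeft_apply]
      rw [← map_mul, ← map_add, hps, hps]
      congr 1; rw [C_1]; ring
    · simp only [b, LinearMap.mulLeft_apply]
      rw [← map_mul, ← hmkC, ← map_sub]
      have h1 : Ideal.Quotient.mk (Ideal.span {q}) (X * p (m + 1) - C (1 + s) * p (m + 1)) =
        Ideal.Quotient.mk (Ideal.span {q}) ((X - C (1 + s)) * p (m + 1) - q) := by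
        rw [map_sub _ _ q, hqz, sub_zero, sub_mul]
      rw [h1]
      refine hspan (m + 1) _ ?_
      rw [hps]
      set P := (X - C (1 + s)) * ((X - C (1 + s')) * (X - C 1) ^ m) with hP
      have hmon : P.Monic := (monic_X_sub_C _).mul ((monic_X_sub_C _).mul ((monic_X_sub_C _).pow _))
      have hdeg : P.natDegree = m + 2 := by
        rw [hP, ← hps, (monic_X_sub_C (1 + s)).natDegree_mul (hpm (m + 1)), hpd (m + 1), natDegree_X_sub_C]; omega
      have hnext : P.nextCoeff = q.nextCoeff := by
        rw [hP, (monic_X_sub_C _).nextCoeff_mul ((monic_X_sub_C _).mul ((monic_X_sub_C _).pow _)),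
          (monic_X_sub_C _).nextCoeff_mul ((monic_X_sub_C _).pow _),
          (monic_X_sub_C _).nextCoeff_pow, nextCoeff_X_sub_C, nextCoeff_X_sub_C, nextCoeff_X_sub_C,
          nextCoeff_of_natDegree_pos (by omega), hn]
        simp only [nsmul_eq_mul, Nat.add_one_sub_one]
        linear_combination hc
      rw [Polynomial.degree_lt_iff_coeff_zero]
      intro j hj
      rw [nextCoeff_of_natDegree_pos (by omega), nextCoeff_of_natDegree_pos (by omega), hn, hdeg]
        at hnext
      rw [coeff_sub, sub_eq_zero]
      obtain rfl | rfl | hj : j = m + 1 ∨ j = m + 2 ∨ m + 2 < j := by omega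
      · exact hnext
      · rw [← hdeg, hmon.coeff_natDegree, hdeg, ← hn, hq.coeff_natDegree]
      · rw [coeff_eq_zero_of_natDegree_lt (by omega), coeff_eq_zero_of_natDegree_lt (by omega)]

theorem idem_two_class {S : Type*} [CommRing S] (hid : ∀ e : S, e * e = e → e = 0 ∨ e = 1)
    (E : Matrix (Fin 2) (Fin 2) S) (hE : E * E = E) :
    (E 0 0 = 0 ∧ E 0 1 = 0 ∧ E 1 0 = 0 ∧ E 1 1 = 0) ∨
    (E 0 0 = 1 ∧ E 0 1 = 0 ∧ E 1 0 = 0 ∧ E 1 1 = 1) ∨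
    (E 0 0 + E 1 1 = 1 ∧ E 0 0 * E 1 1 = E 0 1 * E 1 0) := by
  have h00 := congrFun (congrFun hE 0) 0
  have h01 := congrFun (congrFun hE 0) 1
  have h10 := congrFun (congrFun hE 1) 0
  have h11 := congrFun (congrFun hE 1) 1
  have hdet := congrArg Matrix.det hE
  rw [Matrix.det_mul, Matrix.det_fin_two] at hdet
  simp only [Matrix.mul_apply, Fin.sum_univ_two] at h00 h01 h10 h11
  generalize E 0 0 = a at *
  generalize E 0 1 = b at *
  generalize E 1 0 = c at *
  generalize E 1 1 = d at *
  rcases hid (a * d - b * c) hdet with h | h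
  · rcases hid (a + d) (by linear_combination h00 + h11 + 2 * h) with h' | h'
    · left
      refine ⟨?_, ?_, ?_, ?_⟩
      · linear_combination -h00 + a * h' - h
      · linear_combination -h01 + b * h'
      · linear_combination -h10 + c * h'
      · linear_combination -h11 + d * h' - h
    · right; right
      exact ⟨h', by linear_combination h⟩
  · right; left
    refine ⟨?_, ?_, ?_, ?_⟩
    · linear_combination (1 - a) * h + d * h00 - b * h10
    · linear_combination (-b) * h + d * h01 - b * h11
    · linear_combination (-c) * h + a * h10 - c * h00
    · linear_combination (1 - d) * h + a * h11 - c * h01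

theorem cube_of_connected {S : Type*} [CommRing S] (hid : ∀ e : S, e * e = e → e = 0 ∨ e = 1)
    (h : ∀ A : Matrix (Fin 2) (Fin 2) S, ∃ E₁ E₂ E₃ : Matrix (Fin 2) (Fin 2) S,
          E₁ * E₁ = E₁ ∧ E₂ * E₂ = E₂ ∧ E₃ * E₃ = E₃ ∧ A = E₁ + E₂ + E₃) (x : S) :
    x ^ 3 = x := by
  have h23 : (2 : S) = 0 ∨ (3 : S) = 0 := by
    obtain ⟨E, F, G, hE, hF, hG, hA⟩ := h !![0, -1; 1, 1]
    have h00 := congrFun (congrFun hA 0) 0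
    have h01 := congrFun (congrFun hA 0) 1
    have h10 := congrFun (congrFun hA 1) 0
    have h11 := congrFun (congrFun hA 1) 1
    simp at h00 h01 h10 h11
    rcases idem_two_class hid E hE with h1 | h1 | h1 <;>
    rcases idem_two_class hid F hF with h2 | h2 | h2 <;>
    rcases idem_two_class hid G hG with h3 | h3 | h3 <;>
    grind
  have hx : ∃ k : S, (k = 0 ∨ k = 1 ∨ k = 2 ∨ k = 3 ∨ k = 4 ∨ k = 5 ∨ k = 6) ∧ x = k := by
    obtain ⟨E, F, G, hE, hF, hG, hA⟩ := h !![x, 0; 0, 0]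
    have h00 := congrFun (congrFun hA 0) 0
    have h11 := congrFun (congrFun hA 1) 1
    simp at h00 h11
    have key : ∀ E : Matrix (Fin 2) (Fin 2) S, E * E = E →
        (E 0 0 + E 1 1 = 0 ∨ E 0 0 + E 1 1 = 1 ∨ E 0 0 + E 1 1 = 2) := by
      intro E hE
      rcases idem_two_class hid E hE with h1 | h1 | h1
      · left; rw [h1.1, h1.2.2.2, add_zero]
      · right; right; rw [h1.1, h1.2.2.2]; norm_num
      · right; left; exact h1.1
    refine ⟨x, ?_, rfl⟩
    have hs : x = (E 0 0 + E 1 1) + (F 0 0 + F 1 1) + (G 0 0 + G 1 1) := by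
      linear_combination h00 + h11
    rw [hs]
    rcases key E hE with h1 | h1 | h1 <;>
    rcases key F hF with h2 | h2 | h2 <;>
    rcases key G hG with h3 | h3 | h3 <;> rw [h1, h2, h3] <;> norm_num
  obtain ⟨k, hk, rfl⟩ := hx
  rcases h23 with h2 | h2 <;> rcases hk with rfl | rfl | rfl | rfl | rfl | rfl | rfl <;> grind

theorem one_imp_three {R : Type*} [CommRing R]
    (h : ∀ A : Matrix (Fin 2) (Fin 2) R, ∃ E₁ E₂ E₃ : Matrix (Fin 2) (Fin 2) R,
          E₁ * E₁ = E₁ ∧ E₂ * E₂ = E₂ ∧ E₃ * E₃ = E₃ ∧ A = E₁ + E₂ + E₃) (x : R) :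
    x ^ 3 = x := by
  by_contra hne
  have hy : x ^ 3 - x ≠ 0 := sub_ne_zero.mpr hne
  obtain ⟨I, -, hI⟩ := zorn_le_nonempty₀ {I : Ideal R | x ^ 3 - x ∉ I} (by
    intro c hc hch J hJ
    refine ⟨sSup c, ?_, fun z hz => le_sSup hz⟩
    intro hmem
    obtain ⟨K, hK, hmK⟩ := (Submodule.mem_sSup_of_directed ⟨J, hJ⟩ hch.directedOn).1 hmem
    exact hc hK hmK) ⊥ (by simpa using hy)
  have hmem : x ^ 3 - x ∉ I := hI.prop
  have hmax : ∀ a : R, a ∉ I → x ^ 3 - x ∈ I ⊔ Ideal.span {a} := by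
    intro a ha
    by_contra hc
    have := hI.le_of_ge (y := I ⊔ Ideal.span {a}) hc le_sup_left
    exact ha (this (Ideal.mem_sup_right (Ideal.mem_span_singleton_self a)))
  have key := cube_of_connected (S := R ⧸ I) ?_ ?_ (Ideal.Quotient.mk I x)
  · apply hmem
    rw [← Ideal.Quotient.eq_zero_iff_mem, map_sub, map_pow, key, sub_self]
  · intro e he
    obtain ⟨e, rfl⟩ := Ideal.Quotient.mk_surjective e
    have he' : e * e - e ∈ I := by
      rw [← Ideal.Quotient.eq_zero_iff_mem, map_sub, map_mul, he, sub_self]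
    by_contra hcon
    push Not at hcon
    have h0 : e ∉ I := fun hh => hcon.1 (Ideal.Quotient.eq_zero_iff_mem.2 hh)
    have h1 : e - 1 ∉ I := fun hh => hcon.2 (by
      have := Ideal.Quotient.eq_zero_iff_mem.2 hh
      rw [map_sub, map_one] at this
      exact sub_eq_zero.1 this)
    obtain ⟨i, hi, j, hj, hij⟩ := Submodule.mem_sup.1 (hmax _ h0)
    obtain ⟨i', hi', j', hj', hij'⟩ := Submodule.mem_sup.1 (hmax _ h1)
    obtain ⟨r, rfl⟩ := Ideal.mem_span_singleton'.1 hj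
    obtain ⟨r', rfl⟩ := Ideal.mem_span_singleton'.1 hj'
    apply hmem
    have : x ^ 3 - x = e * i' + (1 - e) * i + (r' - r) * (e * e - e) := by
      linear_combination (-e) * hij' - (1 - e) * hij
    rw [this]
    exact I.add_mem (I.add_mem (I.mul_mem_left _ hi') (I.mul_mem_left _ hi)) (I.mul_mem_left _ he')
  · intro A
    obtain ⟨E, F, G, hE, hF, hG, hA⟩ := h (A.map (Function.surjInv Ideal.Quotient.mk_surjective))
    refine ⟨(Ideal.Quotient.mk I).mapMatrix E, (Ideal.Quotient.mk I).mapMatrix F,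
      (Ideal.Quotient.mk I).mapMatrix G, by rw [← map_mul, hE], by rw [← map_mul, hF],
      by rw [← map_mul, hG], ?_⟩
    rw [← map_add, ← map_add, ← hA]
    ext i j
    simp [Function.surjInv_eq]

theorem three_idem_quotient_ne_zero {K : Type*} [Field K]
    (hK : ∀ c : K, ∃ s s' : K, s * s = s ∧ s' * s' = s' ∧ c = s + s') (q : K[X]) (hq : q ≠ 0) :
    ∃ e₁ e₂ e₃ : Module.End K (K[X] ⧸ Submodule.span K[X] {q}),
      (∀ x, e₁ (e₁ x) = e₁ x) ∧ (∀ x, e₂ (e₂ x) = e₂ x) ∧ (∀ x, e₃ (e₃ x) = e₃ x) ∧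
      ∀ x, (X : K[X]) • x = e₁ x + e₂ x + e₃ x := by
  have hI : Submodule.span K[X] {q} = Ideal.span {q * C q.leadingCoeff⁻¹} := by
    refine (Ideal.span_singleton_eq_span_singleton.2 ?_)
    refine associated_mul_unit_right _ _ ?_
    exact (Polynomial.isUnit_C).2 (isUnit_iff_ne_zero.2 (inv_ne_zero (leadingCoeff_ne_zero.2 hq)))
  rw [hI]
  obtain ⟨e₁, e₂, e₃, h1, h2, h3, h⟩ := three_idem_quotient hK _ (monic_mul_leadingCoeff_inv hq)
  refine ⟨e₁, e₂, e₃, fun x => LinearMap.congr_fun h1 x, fun x => LinearMap.congr_fun h2 x,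
    fun x => LinearMap.congr_fun h3 x, fun x => ?_⟩
  have := LinearMap.congr_fun h x
  rw [LinearMap.mulLeft_apply] at this
  rw [← LinearMap.add_apply, ← LinearMap.add_apply, ← this]
  obtain ⟨r, rfl⟩ := Ideal.Quotient.mk_surjective x
  rfl

theorem three_idem_end {K V : Type*} [Field K]
    (hK : ∀ c : K, ∃ s s' : K, s * s = s ∧ s' * s' = s' ∧ c = s + s')
    [AddCommGroup V] [Module K V] [Module.Finite K V] (f : Module.End K V) : SumThreeIdem f := by
  classical
  obtain ⟨ι, _, p, hp, e, ⟨g⟩⟩ := Module.equiv_directSum_of_isTorsion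
    (R := K[X]) (M := Module.AEval' f) (Module.AEval.isTorsion_of_finiteDimensional K V f)
  choose e₁ e₂ e₃ h1 h2 h3 h using fun i =>
    three_idem_quotient_ne_zero hK (p i ^ e i) (pow_ne_zero _ (hp i).ne_zero)
  let L : V ≃ₗ[K] DirectSum ι fun i => K[X] ⧸ Submodule.span K[X] {p i ^ e i} :=
    (Module.AEval'.of f).trans (g.restrictScalars K)
  have hL : ∀ v, L (f v) = (X : K[X]) • L v := by
    intro v
    change g (Module.AEval'.of f (f v)) = (X : K[X]) • g (Module.AEval'.of f v)
    rw [← map_smul, Module.AEval'.X_smul_of]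
  let D : (∀ i, Module.End K (K[X] ⧸ Submodule.span K[X] {p i ^ e i})) →
    Module.End K (DirectSum ι fun i => K[X] ⧸ Submodule.span K[X] {p i ^ e i}) :=
    fun e => DFinsupp.mapRange.linearMap e
  have hD : ∀ e x i, D e x i = e i (x i) := fun e x i => rfl
  have main : ∀ e, (∀ i x, e i (e i x) = e i x) → ∀ x, D e (D e x) = D e x := by
    intro e he x
    refine DFinsupp.ext fun i => ?_
    exact he i (x i)
  let Q : Module.End K (DirectSum ι fun i => K[X] ⧸ Submodule.span K[X] {p i ^ e i}) → Module.End K V :=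
    fun T => L.symm.toLinearMap ∘ₗ T ∘ₗ L.toLinearMap
  have hQ : ∀ T v, Q T v = L.symm (T (L v)) := fun T v => rfl
  have hQQ : ∀ e, (∀ i x, e i (e i x) = e i x) → Q (D e) * Q (D e) = Q (D e) := by
    intro e he
    refine LinearMap.ext fun v => ?_
    rw [Module.End.mul_apply, hQ, hQ, LinearEquiv.apply_symm_apply, main e he]
  refine ⟨Q (D e₁), Q (D e₂), Q (D e₃), hQQ _ h1, hQQ _ h2, hQQ _ h3, ?_⟩
  refine LinearMap.ext fun v => L.injective ?_
  rw [hL, LinearMap.add_apply, LinearMap.add_apply, map_add, map_add, hQ, hQ, hQ,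
    LinearEquiv.apply_symm_apply, LinearEquiv.apply_symm_apply, LinearEquiv.apply_symm_apply]
  refine DFinsupp.ext fun i => ?_
  exact h i (L v i)

theorem field_sum_two {K : Type*} [Field K] (h : ∀ a : K, a ^ 3 = a) (c : K) :
    ∃ s s' : K, s * s = s ∧ s' * s' = s' ∧ c = s + s' := by
  have h6 : (2 : K) * 3 = 0 := by linear_combination h 2
  have hc : c * ((c - 1) * (c + 1)) = 0 := by linear_combination h c
  rcases mul_eq_zero.1 hc with hc | hc
  · exact ⟨0, 0, by simp, by simp, by simp [hc]⟩
  rcases mul_eq_zero.1 hc with hc | hc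
  · exact ⟨1, 0, by simp, by simp, by linear_combination hc⟩
  rcases mul_eq_zero.1 h6 with h6 | h6
  · exact ⟨1, 0, by simp, by simp, by linear_combination hc - h6⟩
  · exact ⟨1, 1, by simp, by simp, by linear_combination hc - h6⟩

theorem three_idem_matrix_field {K : Type*} [Field K] (h : ∀ a : K, a ^ 3 = a) (n : ℕ)
    (A : Matrix (Fin n) (Fin n) K) : SumThreeIdem A := by
  have h1 := (three_idem_end (field_sum_two h) (Matrix.toLinAlgEquiv' A)).map
    (Matrix.toLinAlgEquiv' (R := K) (n := Fin n)).symm.toRingEquiv.toRingHom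
  convert h1
  exact ((Matrix.toLinAlgEquiv' (R := K) (n := Fin n)).symm_apply_apply A).symm

theorem three_idem_matrix_pi {ι : Type*} (K : ι → Type*) [∀ i, CommRing (K i)] (n : ℕ)
    (h : ∀ i, ∀ A : Matrix (Fin n) (Fin n) (K i), SumThreeIdem A)
    (A : Matrix (Fin n) (Fin n) (∀ i, K i)) : SumThreeIdem A := by
  choose E F G hE hF hG hA using fun i => h i (A.map fun x => x i)
  refine ⟨Matrix.of fun a b i => E i a b, Matrix.of fun a b i => F i a b,
    Matrix.of fun a b i => G i a b, ?_, ?_, ?_, ?_⟩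
  · ext a b i
    have := congrFun (congrFun (hE i) a) b
    simpa [Matrix.mul_apply] using this
  · ext a b i
    have := congrFun (congrFun (hF i) a) b
    simpa [Matrix.mul_apply] using this
  · ext a b i
    have := congrFun (congrFun (hG i) a) b
    simpa [Matrix.mul_apply] using this
  · ext a b i
    have := congrFun (congrFun (hA i) a) b
    simpa using this

theorem three_idem_matrix_noeth {S : Type*} [CommRing S] [IsNoetherianRing S]
    (h : ∀ a : S, a ^ 3 = a) (n : ℕ)
    (A : Matrix (Fin n) (Fin n) S) : SumThreeIdem A := by
  have hred : IsReduced S := by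
    rw [isReduced_iff_pow_one_lt 2 (by norm_num)]
    intro x hx
    rw [← h x, pow_succ, hx, zero_mul]
  have hdim : Ring.KrullDimLE 0 S := Ring.KrullDimLE.mk₀ fun I hI => by
    rw [Ideal.Quotient.maximal_ideal_iff_isField_quotient]
    refine ⟨⟨0, 1, zero_ne_one⟩, mul_comm, fun {a} ha => ⟨a, ?_⟩⟩
    obtain ⟨r, rfl⟩ := Ideal.Quotient.mk_surjective a
    apply mul_left_cancel₀ ha
    rw [← map_mul, ← map_mul, mul_one]
    congr 1
    linear_combination h r
  have := IsNoetherianRing.isArtinianRing_of_krullDimLE_zero (R := S)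
  let φ := (IsArtinianRing.equivPi S).toRingEquiv
  have h1 := three_idem_matrix_pi (fun I : MaximalSpectrum S => S ⧸ I.asIdeal) n (fun I B => by
    let := Ideal.Quotient.field I.asIdeal
    refine three_idem_matrix_field (K := S ⧸ I.asIdeal) ?_ n B
    intro a
    obtain ⟨r, rfl⟩ := Ideal.Quotient.mk_surjective a
    rw [← map_pow, h]) (φ.toRingHom.mapMatrix A)
  have h2 := h1.map φ.symm.toRingHom.mapMatrix
  convert h2
  ext i j
  simp

theorem three_idem_matrix {R : Type*} [CommRing R] (h : ∀ a : R, a ^ 3 = a) (n : ℕ)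
    (A : Matrix (Fin n) (Fin n) R) : SumThreeIdem A := by
  let s : Set R := Set.range fun ij : Fin n × Fin n => A ij.1 ij.2
  have := is_noetherian_subring_closure s (Set.finite_range _)
  have h1 := (three_idem_matrix_noeth (S := Subring.closure s)
    (fun a => Subtype.ext (h a)) n
    (fun i j => ⟨A i j, Subring.subset_closure ⟨(i, j), rfl⟩⟩)).map
      (Subring.closure s).subtype.mapMatrix
  exact h1

/-- For a commutative ring `R`, the following are equivalent:
(1) every matrix in `M_2(R)` is a sum of three idempotents;
(2) for every `n ≥ 1`, every matrix in `M_n(R)` is a sum of three idempotents;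
(3) `R` satisfies the identity `x^3 = x`. -/
theorem matrix_sum_three_idempotents_comm_ring_tfae (R : Type*) [CommRing R] :
    List.TFAE [
      ∀ A : Matrix (Fin 2) (Fin 2) R,
        ∃ E₁ E₂ E₃ : Matrix (Fin 2) (Fin 2) R,
          E₁ * E₁ = E₁ ∧ E₂ * E₂ = E₂ ∧ E₃ * E₃ = E₃ ∧ A = E₁ + E₂ + E₃,
      ∀ n : ℕ, 1 ≤ n → ∀ A : Matrix (Fin n) (Fin n) R,
        ∃ E₁ E₂ E₃ : Matrix (Fin n) (Fin n) R,
          E₁ * E₁ = E₁ ∧ E₂ * E₂ = E₂ ∧ E₃ * E₃ = E₃ ∧ A = E₁ + E₂ + E₃,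
      ∀ a : R, a ^ 3 = a] := by
  tfae_have 2 → 1 := fun h => h 2 (by norm_num)
  tfae_have 1 → 3 := fun h => one_imp_three h
  tfae_have 3 → 2 := fun h n _ A => three_idem_matrix h n A
  tfae_finish
end
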